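/- Let n ≥ 1 and 1 ≤ k ≤ n. For each j with 0 ≤ j ≤ n−k, the number of paths p in 𝒫(n,1,1) with p_1 = +1 and p_{2n+1} = +1 that have exactly n−k double rises, of which exactly j lie on or below the x-axis, equals (1/(n−k+1))·C(n,k)·C(n−1,k−1). -/

import Mathlib

open Finset

/-- The sum of the first `m` entries of a sequence `p` of length `N` (the height `s_m`). -/
def psum {N : ℕ} (p : Fin N → ℤ) (m : ℕ) : ℤ :=
  ∑ j ∈ Finset.univ.filter (fun j : Fin N => (j : ℕ) < m), p j


namespace NCF

/-! ### Counting words by number of double rises -/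

/-- Number of `true` entries. -/
def ups {N : ℕ} (q : Fin N → Bool) : ℕ := ∑ i, if q i = true then 1 else 0

/-- Number of double rises. -/
def dr {L : ℕ} (q : Fin (L+1) → Bool) : ℕ :=
  ∑ i : Fin L, if q i.castSucc = true ∧ q i.succ = true then 1 else 0

/-- Words with given first letter, last letter up, given ups and double rises. -/
def W (L : ℕ) (a : Bool) (u r : ℕ) : ℕ :=
  ∑ q : Fin (L+1) → Bool,
    if q 0 = a ∧ q (Fin.last L) = true ∧ ups q = u ∧ dr q = r then 1 else 0

/-- Number of compositions of `d` into `m` positive parts. -/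
def comp : ℕ → ℕ → ℕ
  | 0, 0 => 1
  | 0, _+1 => 0
  | _+1, 0 => 0
  | d+1, m+1 => Nat.choose d m

lemma comp_succ (d m : ℕ) : comp (d+1) (m+1) = comp d m + comp d (m+1) := by
  cases d <;> cases m <;> simp [comp, Nat.choose_succ_succ]

lemma ups_cons {L : ℕ} (a : Bool) (q : Fin L → Bool) :
    ups (Fin.cons a q : Fin (L+1) → Bool) = (if a = true then 1 else 0) + ups q := by
  unfold ups
  rw [Fin.sum_univ_succ]
  rfl

lemma dr_cons {L : ℕ} (a : Bool) (q : Fin (L+1) → Bool) :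
    dr (Fin.cons a q : Fin (L+2) → Bool)
      = (if a = true ∧ q 0 = true then 1 else 0) + dr q := by
  unfold dr
  rw [Fin.sum_univ_succ]
  congr 1

lemma W_sum (L : ℕ) (a : Bool) (u r : ℕ) :
    W (L+1) a u r = ∑ q : Fin (L+1) → Bool,
      if q (Fin.last L) = true ∧ (if a = true then 1 else 0) + ups q = u ∧
        (if a = true ∧ q 0 = true then 1 else 0) + dr q = r then 1 else 0 := by
  unfold W
  rw [← (Fin.consEquiv (fun _ : Fin (L+2) => Bool)).sum_comp, Fintype.sum_prod_type]
  have key : ∀ (b : Bool) (q : Fin (L+1) → Bool),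
      (Fin.consEquiv (fun _ : Fin (L+2) => Bool)) (b, q) = Fin.cons b q := fun _ _ => rfl
  have hl : ∀ (b : Bool) (q : Fin (L+1) → Bool),
      (Fin.cons b q : Fin (L+2) → Bool) (Fin.last (L+1)) = q (Fin.last L) := by
    intro b q; rw [← Fin.succ_last, Fin.cons_succ]
  simp only [key, hl, ups_cons, dr_cons, Fin.cons_zero]
  cases a <;> simp

lemma W_true_zero (L r : ℕ) : W (L+1) true 0 r = 0 := by
  rw [W_sum]; simp

lemma W_false (L u r : ℕ) : W (L+1) false u r = W L true u r + W L false u r := by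
  rw [W_sum]; unfold W
  rw [← Finset.sum_add_distrib]
  refine Finset.sum_congr rfl fun q _ => ?_
  cases h : q 0 <;> simp

lemma W_true (L u r : ℕ) :
    W (L+1) true (u+1) (r+1) = W L true u r + W L false u (r+1) := by
  rw [W_sum]; unfold W
  rw [← Finset.sum_add_distrib]
  refine Finset.sum_congr rfl fun q _ => ?_
  have e : 1 + ups q = u + 1 ↔ ups q = u := by omega
  cases h : q 0 <;> simp [e, add_comm 1 (dr q)]

lemma W_true_r0 (L u : ℕ) :
    W (L+1) true (u+1) 0 = W L false u 0 := by
  rw [W_sum]; unfold W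
  refine Finset.sum_congr rfl fun q _ => ?_
  have e : 1 + ups q = u + 1 ↔ ups q = u := by omega
  cases h : q 0 <;> simp [e, add_comm 1 (dr q)]

lemma W_base (a : Bool) (u r : ℕ) :
    W 0 a u r = if a = true ∧ u = 1 ∧ r = 0 then 1 else 0 := by
  unfold W ups dr
  rw [← (Equiv.funUnique (Fin 1) Bool).symm.sum_comp]
  rw [Fintype.sum_bool]
  cases a <;> simp [eq_comm]

/-- With no `true` at all, the last letter cannot be `true`. -/
lemma W_zero (L : ℕ) (a : Bool) (r : ℕ) : W L a 0 r = 0 := by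
  unfold W
  refine Finset.sum_eq_zero fun q _ => ?_
  rw [if_neg]
  rintro ⟨_, h2, h3, _⟩
  unfold ups at h3
  have := (Finset.sum_eq_zero_iff.1 h3) (Fin.last L) (Finset.mem_univ _)
  simp [h2] at this

lemma W_big (L : ℕ) (a : Bool) (u r : ℕ) (hu : L + 1 < u) : W L a u r = 0 := by
  unfold W
  refine Finset.sum_eq_zero fun q _ => ?_
  rw [if_neg]
  rintro ⟨_, _, h3, _⟩
  have : ups q ≤ ∑ _i : Fin (L+1), 1 := by
    unfold ups
    refine Finset.sum_le_sum fun i _ => ?_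
    split_ifs <;> simp
  simp at this
  omega

lemma W_closed (L : ℕ) : ∀ u d r : ℕ, u + d = L →
    W L true (u+1) r = Nat.choose u r * comp d (u - r) ∧
    W L false (u+1) r = Nat.choose u r * comp d (u - r + 1) := by
  induction L with
  | zero =>
    intro u d r h
    obtain ⟨rfl, rfl⟩ : u = 0 ∧ d = 0 := by omega
    rw [W_base, W_base]
    cases r <;> simp [comp]
  | succ L ih =>
    intro u d r h
    constructor
    · rcases u with _ | u
      · obtain rfl : d = L + 1 := by omega
        rcases r with _ | r
        · rw [W_true_r0, W_zero]; simp [comp]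
        · rw [W_true, W_zero, W_zero]; simp
      · rcases r with _ | r
        · rw [W_true_r0, (ih u d 0 (by omega)).2]; simp
        · rw [W_true, (ih u d r (by omega)).1, (ih u d (r+1) (by omega)).2,
            Nat.choose_succ_succ, Nat.add_sub_add_right, add_mul]
          congr 1
          rcases Nat.lt_or_ge r u with hr | hr
          · rw [show u - (r+1) + 1 = u - r by omega]
          · rw [Nat.choose_eq_zero_of_lt (by omega)]; simp
    · rcases d with _ | d
      · rw [W_false, W_big _ _ _ _ (by omega), W_big _ _ _ _ (by omega)]
        simp [comp]
      · rw [W_false, (ih u d r (by omega)).1, (ih u d r (by omega)).2, comp_succ, mul_add]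

/-! ### Rank argument -/

lemma exists_unique_rank {α : Type*} [DecidableEq α] (M : Finset α) (f : α → ℤ)
    (hf : ∀ a ∈ M, ∀ b ∈ M, f a = f b → a = b) (j : ℕ) (hj : j < M.card) :
    (M.filter (fun v => (M.filter (fun w => f w < f v)).card = j)).card = 1 := by
  set rk : α → ℕ := fun v => (M.filter (fun w => f w < f v)).card with hrk
  have hlt : ∀ a ∈ M, ∀ b ∈ M, f a < f b → rk a < rk b := by
    intro a ha b hb hab
    refine Finset.card_lt_card ?_
    rw [Finset.ssubset_iff_of_subset]
    · exact ⟨a, by simp [ha, hab], by simp⟩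
    · intro w; simp only [Finset.mem_filter]; rintro ⟨h1, h2⟩; exact ⟨h1, h2.trans hab⟩
  have hinj : Set.InjOn rk M := by
    intro a ha b hb hab
    rcases lt_trichotomy (f a) (f b) with h | h | h
    · have := hlt a ha b hb h; omega
    · exact hf a ha b hb h
    · have := hlt b hb a ha h; omega
  have himg : M.image rk = Finset.range M.card := by
    refine Finset.eq_of_subset_of_card_le ?_ ?_
    · intro x hx
      obtain ⟨a, ha, rfl⟩ := Finset.mem_image.1 hx
      refine Finset.mem_range.2 (Finset.card_lt_card ?_)
      rw [Finset.ssubset_iff_of_subset (Finset.filter_subset _ _)]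
      exact ⟨a, ha, by simp⟩
    · rw [Finset.card_image_of_injOn hinj]; simp
  have : j ∈ M.image rk := by rw [himg]; simpa using hj
  obtain ⟨a, ha, rfl⟩ := Finset.mem_image.1 this
  rw [Finset.card_eq_one]
  refine ⟨a, ?_⟩
  ext b
  simp only [Finset.mem_filter, Finset.mem_singleton]
  constructor
  · rintro ⟨hb, h⟩; exact hinj hb ha h
  · rintro rfl; exact ⟨ha, rfl⟩

/-! ### Cyclic part -/

/-- The step attached to a Boolean. -/
def stepv (b : Bool) : ℤ := if b = true then 1 else -1

section cyc
variable {n : ℕ}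

/-- Periodic height. -/
def P (q : Fin (2*n+1) → Bool) (m : ℕ) : ℤ :=
  ∑ t ∈ Finset.range m, stepv (q (Fin.ofNat (2*n+1) t))

/-- Sort key. -/
def K (q : Fin (2*n+1) → Bool) (m : ℕ) : ℤ := (2*n+1 : ℕ) * P q m - m

/-- Rotation. -/
def rot (v : Fin (2*n+1)) (q : Fin (2*n+1) → Bool) : Fin (2*n+1) → Bool := fun i => q (i + v)

/-- Cyclic double rises. -/
def M (q : Fin (2*n+1) → Bool) : Finset (Fin (2*n+1)) :=
  univ.filter (fun i => q (i - 1) = true ∧ q i = true)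

/-- Rank of a position. -/
def rank (q : Fin (2*n+1) → Bool) (v : Fin (2*n+1)) : ℕ :=
  ((M q).filter (fun w => K q w.val < K q v.val)).card

lemma psum_eq (q : Fin (2*n+1) → Bool) (m : ℕ) (hm : m ≤ 2*n+1) :
    psum (fun i => stepv (q i)) m = P q m := by
  unfold psum P
  rw [Finset.sum_filter]
  have := Fin.sum_univ_eq_sum_range
    (fun t => if t < m then stepv (q (Fin.ofNat (2*n+1) t)) else 0) (2*n+1)
  simp only [Fin.ofNat_val_eq_self] at this
  rw [this, ← Finset.sum_filter]
  refine Finset.sum_congr ?_ fun _ _ => rfl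
  ext t; simp; omega

lemma total (q : Fin (2*n+1) → Bool) (h : ups q = n + 1) : P q (2*n+1) = 1 := by
  unfold P
  rw [← Fin.sum_univ_eq_sum_range (fun t => stepv (q (Fin.ofNat (2*n+1) t))) (2*n+1)]
  simp only [Fin.ofNat_val_eq_self]
  have h1 : ∀ i, stepv (q i) = 2 * ((if q i = true then 1 else 0 : ℕ) : ℤ) - 1 := by
    intro i; unfold stepv; split_ifs <;> simp
  simp only [h1]
  rw [Finset.sum_sub_distrib, ← Finset.mul_sum, ← Nat.cast_sum]
  unfold ups at h
  rw [h]; simp; ring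

lemma P_add (q : Fin (2*n+1) → Bool) (a m : ℕ) :
    P q (a + m) = P q a + ∑ t ∈ Finset.range m, stepv (q (Fin.ofNat (2*n+1) (a + t))) := by
  unfold P
  rw [Finset.sum_range_add]

lemma K_add (q : Fin (2*n+1) → Bool) (h : ups q = n + 1) (m : ℕ) :
    K q (m + (2*n+1)) = K q m := by
  unfold K
  rw [add_comm m, P_add, total q h]
  have : ∀ t, Fin.ofNat (2*n+1) (2*n+1+t) = Fin.ofNat (2*n+1) t := by
    intro t; apply Fin.ext; simp
  simp only [this]
  unfold P
  push_cast; ring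

lemma K_mul (q : Fin (2*n+1) → Bool) (h : ups q = n + 1) (m c : ℕ) :
    K q (m + (2*n+1) * c) = K q m := by
  induction c with
  | zero => simp
  | succ c ih => rw [mul_add, mul_one, ← add_assoc, K_add q h, ih]

lemma K_mod (q : Fin (2*n+1) → Bool) (h : ups q = n + 1) (m : ℕ) :
    K q (m % (2*n+1)) = K q m := by
  conv_rhs => rw [← Nat.mod_add_div m (2*n+1)]
  rw [K_mul q h]

lemma K_rot (q : Fin (2*n+1) → Bool) (h : ups q = n + 1) (v i : Fin (2*n+1)) :
    K (rot v q) i.val = K q (i + v).val - K q v.val := by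
  rw [Fin.val_add, K_mod q h]
  unfold K
  rw [add_comm i.val, P_add]
  have : ∀ t, Fin.ofNat (2*n+1) (v.val + t) = Fin.ofNat (2*n+1) t + v := by
    intro t; apply Fin.ext; simp [Fin.val_add, add_comm]
  simp only [this]
  unfold P rot
  push_cast; ring

lemma K_inj (q : Fin (2*n+1) → Bool) (a b : Fin (2*n+1)) (h : K q a.val = K q b.val) : a = b := by
  unfold K at h
  have h2 : ((2*n+1 : ℕ) : ℤ) ∣ (a.val : ℤ) - b.val :=
    ⟨P q a.val - P q b.val, by linarith⟩
  have := Int.eq_zero_of_abs_lt_dvd h2 (by have := a.2; have := b.2; rw [abs_lt]; omega)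
  apply Fin.ext; omega

lemma mem_M_rot (q : Fin (2*n+1) → Bool) (v i : Fin (2*n+1)) :
    i ∈ M (rot v q) ↔ i + v ∈ M q := by
  unfold M
  rw [Finset.mem_filter, Finset.mem_filter]
  unfold rot
  rw [sub_add_eq_add_sub]
  simp

lemma ups_rot (q : Fin (2*n+1) → Bool) (v : Fin (2*n+1)) : ups (rot v q) = ups q := by
  unfold ups rot
  exact Equiv.sum_comp (Equiv.addRight v) (fun i => if q i = true then 1 else 0)

lemma card_filter_rot (q : Fin (2*n+1) → Bool) (v : Fin (2*n+1)) (p p' : Fin (2*n+1) → Prop)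
    [DecidablePred p] [DecidablePred p'] (hp : ∀ i, p i ↔ p' (i + v)) :
    ((M (rot v q)).filter p).card = ((M q).filter p').card := by
  refine Finset.card_bij (fun i _ => i + v) ?_ ?_ ?_
  · intro i hi
    simp only [Finset.mem_filter] at hi ⊢
    exact ⟨(mem_M_rot q v i).1 hi.1, (hp i).1 hi.2⟩
  · intro a _ b _ hab; exact add_right_cancel hab
  · intro b hb
    simp only [Finset.mem_filter] at hb
    refine ⟨b - v, ?_, by simp⟩
    simp only [Finset.mem_filter]
    exact ⟨(mem_M_rot q v _).2 (by simpa using hb.1), (hp _).2 (by simpa using hb.2)⟩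

lemma card_M_rot (q : Fin (2*n+1) → Bool) (v : Fin (2*n+1)) : (M (rot v q)).card = (M q).card := by
  have := card_filter_rot q v (fun _ => True) (fun _ => True) (by simp)
  simpa using this

lemma rank_rot (q : Fin (2*n+1) → Bool) (h : ups q = n + 1) (v i : Fin (2*n+1)) :
    rank (rot v q) i = rank q (i + v) := by
  unfold rank
  apply card_filter_rot
  intro w
  rw [K_rot q h, K_rot q h]
  simp

/-- Cyclic words. -/
def A (n s : ℕ) : Finset (Fin (2*n+1) → Bool) :=
  univ.filter (fun q => ups q = n + 1 ∧ (M q).card = s)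

lemma rot_mem (s : ℕ) (q : Fin (2*n+1) → Bool) (v : Fin (2*n+1)) :
    rot v q ∈ A n s ↔ q ∈ A n s := by
  simp [A, ups_rot, card_M_rot]

/-- Rotation as an equivalence. -/
def rotE (v : Fin (2*n+1)) : (Fin (2*n+1) → Bool) ≃ (Fin (2*n+1) → Bool) :=
  Equiv.arrowCongr (Equiv.addRight v).symm (Equiv.refl Bool)

lemma rotE_apply (v : Fin (2*n+1)) (q : Fin (2*n+1) → Bool) : rotE v q = rot v q := by
  ext i; simp [rotE, rot, Equiv.arrowCongr]

lemma double_count (s c : ℕ) (R : (Fin (2*n+1) → Bool) → Fin (2*n+1) → Prop)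
    [∀ q v, Decidable (R q v)]
    (hR : ∀ q ∈ A n s, ∀ v, R q v ↔ R (rot v q) 0)
    (hc : ∀ q ∈ A n s, (univ.filter (fun v => R q v)).card = c) :
    (A n s).card * c = (2*n+1) * ((A n s).filter (fun q => R q 0)).card := by
  have h1 : ∑ q ∈ A n s, ∑ v, (if R q v then 1 else 0) = (A n s).card * c := by
    refine Finset.sum_const_nat fun q hq => ?_
    rw [← hc q hq, Finset.card_filter]
  rw [← h1, Finset.sum_comm]
  have h2 : ∀ v : Fin (2*n+1), ∑ q ∈ A n s, (if R q v then 1 else 0)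
      = ((A n s).filter (fun q => R q 0)).card := by
    intro v
    rw [Finset.card_filter]
    refine Finset.sum_equiv (rotE v) ?_ ?_
    · intro q; rw [rotE_apply, rot_mem]
    · intro q hq; rw [rotE_apply]; simp only [hR q hq v]
  simp only [h2]
  simp

lemma main_count (s j : ℕ) (hj : j < s) :
    ((A n s).filter (fun q => 0 ∈ M q)).card
      = ((A n s).filter (fun q => 0 ∈ M q ∧ rank q 0 = j)).card * s := by
  have h1 := double_count (n := n) s s (fun q v => v ∈ M q)
    (fun q _ v => by rw [mem_M_rot]; simp)
    (fun q hq => by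
      simp only [A, Finset.mem_filter] at hq
      simpa using hq.2.2)
  have h2 := double_count (n := n) s 1 (fun q v => v ∈ M q ∧ rank q v = j)
    (fun q hq v => by
      simp only [A, Finset.mem_filter] at hq
      rw [mem_M_rot, rank_rot q hq.2.1]; simp)
    (fun q hq => by
      simp only [A, Finset.mem_filter] at hq
      have := exists_unique_rank (M q) (fun w => K q w.val)
        (fun a _ b _ h => K_inj q a b h) j (by omega)
      refine Eq.trans ?_ this
      congr 1
      ext v
      rw [Finset.mem_filter, Finset.mem_filter]
      simp [rank])
  refine Nat.eq_of_mul_eq_mul_left (show 0 < 2*n+1 by omega) ?_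
  rw [← h1, ← mul_assoc, ← h2, mul_one]

lemma zero_mem_M (q : Fin (2*n+1) → Bool) :
    0 ∈ M q ↔ q (Fin.last (2*n)) = true ∧ q 0 = true := by
  have : (0 : Fin (2*n+1)) - 1 = Fin.last (2*n) := by
    rw [sub_eq_iff_eq_add]; simp
  simp [M, this]

lemma succ_mem_M (q : Fin (2*n+1) → Bool) (i : Fin (2*n)) :
    i.succ ∈ M q ↔ q i.castSucc = true ∧ q i.succ = true := by
  have : i.succ - 1 = i.castSucc := by
    rw [sub_eq_iff_eq_add]; simp
  simp [M, this]

lemma card_M (q : Fin (2*n+1) → Bool) (h : 0 ∈ M q) : (M q).card = dr q + 1 := by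
  have h0 : (M q).card = (univ.filter (fun i => i ∈ M q)).card := by simp
  rw [h0, Finset.card_filter, Fin.sum_univ_succ, if_pos h, add_comm]
  simp only [succ_mem_M, dr]

lemma rank_zero (q : Fin (2*n+1) → Bool) :
    rank q 0 = (univ.filter (fun i : Fin (2*n) => q i.castSucc = true ∧ q i.succ = true ∧
      psum (fun i => stepv (q i)) (i.val + 1) ≤ 0)).card := by
  have h0 : rank q 0 = (univ.filter (fun w => w ∈ M q ∧ K q w.val < K q 0)).card := by
    unfold rank; congr 1; ext w; rw [Finset.mem_filter, Finset.mem_filter]; simp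
  rw [h0, Finset.card_filter, Fin.sum_univ_succ, Finset.card_filter]
  simp only [Fin.val_zero, lt_irrefl, and_false, if_false, zero_add, succ_mem_M, and_assoc]
  refine Finset.sum_congr rfl fun i _ => ?_
  have : K q i.succ.val < K q 0 ↔ psum (fun i => stepv (q i)) (i.val + 1) ≤ 0 := by
    rw [psum_eq q _ (by omega)]
    have hi := i.2
    simp only [K, Fin.val_succ, P, Finset.range_zero, Finset.sum_empty, mul_zero]
    generalize (∑ t ∈ Finset.range (i.val + 1), stepv (q (Fin.ofNat (2*n+1) t))) = x
    push_cast
    constructor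
    · intro h; by_contra hx
      push Not at hx
      have : (2*(n:ℤ)+1) * 1 ≤ (2*(n:ℤ)+1) * x := by
        apply mul_le_mul_of_nonneg_left <;> omega
      omega
    · intro h
      have : (2*(n:ℤ)+1) * x ≤ 0 := mul_nonpos_of_nonneg_of_nonpos (by omega) h
      omega
  simp only [this]

lemma card_X (r : ℕ) :
    ((A n (r+1)).filter (fun q => 0 ∈ M q)).card = W (2*n) true (n+1) r := by
  unfold W
  rw [← Finset.card_filter]
  congr 1
  ext q
  simp only [A, Finset.mem_filter, Finset.mem_univ, true_and]
  constructor
  · rintro ⟨⟨h1, h2⟩, h3⟩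
    rw [card_M q h3] at h2
    rw [zero_mem_M] at h3
    exact ⟨h3.2, h3.1, h1, by omega⟩
  · rintro ⟨h1, h2, h3, h4⟩
    have h5 : 0 ∈ M q := (zero_mem_M q).2 ⟨h2, h1⟩
    exact ⟨⟨h3, by rw [card_M q h5, h4]⟩, h5⟩

end cyc

lemma stepv_one (b : Bool) : stepv b = 1 ↔ b = true := by cases b <;> simp [stepv]

end NCF

open NCF in
/-- Among paths in 𝒫(n,1,1) starting with an up step and ending with an up step
having exactly `n-k` double rises, for each `0 ≤ j ≤ n-k` the number with exactly `j`
double rises on or below the x-axis is `(1/(n-k+1))·C(n,k)·C(n-1,k-1)`. -/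
theorem narayana_chung_feller_double_rises (n k : ℕ) (hn : 1 ≤ n) (hk1 : 1 ≤ k) (hk2 : k ≤ n)
    (j : ℕ) (hj : j ≤ n - k) :
    Nat.card {p : Fin (2*n+1) → ℤ //
      (∀ i, p i = 1 ∨ p i = -1) ∧
      (univ.filter (fun i => p i = 1)).card = n + 1 ∧
      p ⟨0, Nat.succ_pos _⟩ = 1 ∧
      p (Fin.last (2*n)) = 1 ∧
      (univ.filter (fun i : Fin (2*n) => p i.castSucc = 1 ∧ p i.succ = 1)).card = n - k ∧
      (univ.filter (fun i : Fin (2*n) =>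
        p i.castSucc = 1 ∧ p i.succ = 1 ∧ psum p ((i : ℕ) + 1) ≤ 0)).card = j }
      * (n - k + 1) = Nat.choose n k * Nat.choose (n-1) (k-1) := by
  have hX := card_X (n := n) (n - k)
  rw [main_count (n - k + 1) j (by omega), (W_closed (2*n) n n (n-k) (by omega)).1] at hX
  have hc : Nat.choose n (n-k) * comp n (n - (n - k))
      = Nat.choose n k * Nat.choose (n-1) (k-1) := by
    rw [Nat.choose_symm hk2, show n - (n - k) = k by omega]
    obtain ⟨m, rfl⟩ : ∃ m, n = m + 1 := ⟨n - 1, by omega⟩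
    obtain ⟨l, rfl⟩ : ∃ l, k = l + 1 := ⟨k - 1, by omega⟩
    simp [comp]
  rw [← hc, ← hX]
  congr 1
  have hS : ∀ q : Fin (2*n+1) → Bool,
      q ∈ (A n (n-k+1)).filter (fun q => 0 ∈ M q ∧ rank q 0 = j) ↔
      ((∀ i, stepv (q i) = 1 ∨ stepv (q i) = -1) ∧
      (univ.filter (fun i => stepv (q i) = 1)).card = n + 1 ∧
      stepv (q ⟨0, Nat.succ_pos _⟩) = 1 ∧
      stepv (q (Fin.last (2*n))) = 1 ∧
      (univ.filter (fun i : Fin (2*n) => stepv (q i.castSucc) = 1 ∧ stepv (q i.succ) = 1)).card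
        = n - k ∧
      (univ.filter (fun i : Fin (2*n) =>
        stepv (q i.castSucc) = 1 ∧ stepv (q i.succ) = 1 ∧
          psum (fun i => stepv (q i)) ((i : ℕ) + 1) ≤ 0)).card = j) := by
    intro q
    have hv : ∀ i, stepv (q i) = 1 ∨ stepv (q i) = -1 := by
      intro i; unfold stepv; split_ifs <;> simp
    have hz : (⟨0, Nat.succ_pos _⟩ : Fin (2*n+1)) = 0 := rfl
    simp only [stepv_one, ← rank_zero, hz]
    rw [Finset.card_filter, Finset.card_filter]
    change _ ↔ _ ∧ ups q = n + 1 ∧ _ ∧ _ ∧ dr q = n - k ∧ _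
    simp only [A, Finset.mem_filter, Finset.mem_univ, true_and]
    constructor
    · rintro ⟨⟨h1, h2⟩, h3, h4⟩
      rw [card_M q h3] at h2
      rw [zero_mem_M] at h3
      exact ⟨fun i => by simpa only [stepv_one] using hv i, h1, h3.2, h3.1, by omega, h4⟩
    · rintro ⟨_, h1, h2, h3, h4, h5⟩
      have h6 : 0 ∈ M q := (zero_mem_M q).2 ⟨h3, h2⟩
      exact ⟨⟨h1, by rw [card_M q h6, h4]⟩, h6, h5⟩
  rw [← Nat.card_eq_finsetCard]
  symm
  refine Nat.card_congr (Equiv.ofBijective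
    (fun q => ⟨fun i => stepv (q.1 i), (hS q.1).1 q.2⟩) ⟨?_, ?_⟩)
  · intro a b hab
    apply Subtype.ext
    funext i
    have h := congrFun (congrArg Subtype.val hab) i
    have h' : stepv (a.1 i) = 1 ↔ stepv (b.1 i) = 1 := by
      rw [show stepv (a.1 i) = stepv (b.1 i) from h]
    rw [stepv_one, stepv_one] at h'
    exact Bool.eq_iff_iff.2 h'
  · rintro ⟨p, hp⟩
    obtain ⟨q, rfl⟩ : ∃ q : Fin (2*n+1) → Bool, (fun i => stepv (q i)) = p := by
      refine ⟨fun i => decide (p i = 1), ?_⟩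
      funext i
      rcases hp.1 i with h | h <;> simp [stepv, h]
    exact ⟨⟨q, (hS q).2 hp⟩, rfl⟩
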